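/- Every nonexpansive simple, properly ordered Bratteli-Vershik system is conjugate to a well timed system or conjugate to an untimed system, and not both; that is, the family of nonexpansive systems is the disjoint union of the class of systems conjugate to a well timed system and the class of systems conjugate to an untimed system. -/

import Mathlib

set_option autoImplicit false

/-- An ordered Bratteli diagram: finite nonempty vertex sets `V n`, a single root
vertex at level `0`, finite edge sets `E n` (edges from level `n` to level `n+1`,
multiple edges allowed), every vertex has an outgoing edge, every non-root vertex
an incoming edge, and the edges into each vertex carry a linear order, encoded by
the relation `elt` which relates only edges with the same target. -/
structure BDiagram where
  V : ℕ → Type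
  E : ℕ → Type
  fintV : ∀ n, Fintype (V n)
  fintE : ∀ n, Fintype (E n)
  nonV : ∀ n, Nonempty (V n)
  rootSubsingleton : Subsingleton (V 0)
  src : ∀ {n}, E n → V n
  tgt : ∀ {n}, E n → V (n + 1)
  hasOut : ∀ (n : ℕ) (v : V n), ∃ e : E n, src e = v
  hasIn : ∀ (n : ℕ) (v : V (n + 1)), ∃ e : E n, tgt e = v
  elt : ∀ {n}, E n → E n → Prop
  elt_tgt : ∀ (n : ℕ) (e f : E n), elt e f → tgt e = tgt f
  elt_irrefl : ∀ (n : ℕ) (e : E n), ¬ elt e e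
  elt_trans : ∀ (n : ℕ) (e f g : E n), elt e f → elt f g → elt e g
  elt_total : ∀ (n : ℕ) (e f : E n), tgt e = tgt f → e ≠ f → elt e f ∨ elt f e

namespace BDiagram

variable (B : BDiagram)

def castV {m n : ℕ} (h : m = n) (v : B.V m) : B.V n := h ▸ v

/-- An edge is minimal if no edge (into the same target) is below it. -/
def IsMinEdge {n : ℕ} (e : B.E n) : Prop := ∀ e' : B.E n, ¬ B.elt e' e

/-- An edge is maximal if no edge (into the same target) is above it. -/
def IsMaxEdge {n : ℕ} (e : B.E n) : Prop := ∀ e' : B.E n, ¬ B.elt e e'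

/-- The space of infinite paths from the root. -/
def PathSpace : Type := { x : ∀ n, B.E n // ∀ n, B.tgt (x n) = B.src (x (n + 1)) }

def IsMinPath (x : B.PathSpace) : Prop := ∀ n, B.IsMinEdge (x.1 n)

def IsMaxPath (x : B.PathSpace) : Prop := ∀ n, B.IsMaxEdge (x.1 n)

/-- Properly ordered: unique minimal and unique maximal path. -/
def ProperlyOrdered : Prop :=
  (∃! x : B.PathSpace, B.IsMinPath x) ∧ (∃! x : B.PathSpace, B.IsMaxPath x)

/-- The partial order on cofinal paths: `x < y` iff they eventually agree and at the
last disagreement the edge of `x` is below the edge of `y`. -/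
def pathLT (x y : B.PathSpace) : Prop :=
  ∃ N : ℕ, B.elt (x.1 N) (y.1 N) ∧ ∀ n : ℕ, N < n → x.1 n = y.1 n

/-- `T` is the Vershik map: each non-maximal path goes to its successor, and each
maximal path goes to a minimal path. -/
def IsVershik (T : B.PathSpace ≃ B.PathSpace) : Prop :=
  (∀ x : B.PathSpace, ¬ B.IsMaxPath x →
    B.pathLT x (T x) ∧ ∀ z : B.PathSpace, B.pathLT x z → ¬ B.pathLT z (T x)) ∧
  (∀ x : B.PathSpace, B.IsMaxPath x → B.IsMinPath (T x))

/-- `f` is a chain of consecutive edges on levels `[a, b)`. -/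
def SegOn (f : ∀ i, B.E i) (a b : ℕ) : Prop :=
  ∀ i : ℕ, a ≤ i → i + 1 < b → B.tgt (f i) = B.src (f (i + 1))

/-- Simplicity: some telescoping has complete connections between adjacent levels. -/
def Simple : Prop :=
  ∃ ns : ℕ → ℕ, StrictMono ns ∧ ns 0 = 0 ∧
    ∀ (l c : ℕ), ns (l + 1) = c + 1 →
      ∀ (v : B.V (ns l)) (w : B.V (c + 1)),
        ∃ f : ∀ i, B.E i, B.SegOn f (ns l) (c + 1) ∧ B.src (f (ns l)) = v ∧ B.tgt (f c) = w

/-- The natural (Cantor) topology on the path space, induced from the product of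
the discrete topologies on the edge sets. -/
def pathTop : TopologicalSpace B.PathSpace :=
  TopologicalSpace.induced Subtype.val (@Pi.topologicalSpace ℕ B.E (fun _ => ⊥))

/-- Integer iterates of a bijection of the path space. -/
def iterZ (T : B.PathSpace ≃ B.PathSpace) (m : ℤ) : B.PathSpace ≃ B.PathSpace :=
  (T : Equiv.Perm B.PathSpace) ^ m

/-- Two paths have the same `k`-coding: for every time `m` the initial segments of
`T^m x` and `T^m y` from the root to level `k` coincide. -/
def SameCoding (T : B.PathSpace ≃ B.PathSpace) (k : ℕ) (x y : B.PathSpace) : Prop :=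
  ∀ (m : ℤ) (i : ℕ), i < k → ((B.iterZ T m) x).1 i = ((B.iterZ T m) y).1 i

/-- A depth `k` pair: distinct paths with the same `k`-coding but not the same
`(k+1)`-coding. -/
def DepthPair (T : B.PathSpace ≃ B.PathSpace) (k : ℕ) (x y : B.PathSpace) : Prop :=
  x ≠ y ∧ B.SameCoding T k x y ∧ ¬ B.SameCoding T (k + 1) x y

/-- The pair `x, y` has a `j` cut: for some time `m`, both `T^m x` and `T^m y` are
minimal from the root into level `j`. -/
def HasCut (T : B.PathSpace ≃ B.PathSpace) (j : ℕ) (x y : B.PathSpace) : Prop :=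
  ∃ m : ℤ, (∀ i : ℕ, i < j → B.IsMinEdge (((B.iterZ T m) x).1 i)) ∧
    (∀ i : ℕ, i < j → B.IsMinEdge (((B.iterZ T m) y).1 i))

/-- Nonexpansive: for every `k ≥ 1` there are two distinct paths with the same
`k`-coding. -/
def Nonexpansive (T : B.PathSpace ≃ B.PathSpace) : Prop :=
  ∀ k : ℕ, 1 ≤ k → ∃ x y : B.PathSpace, x ≠ y ∧ B.SameCoding T k x y

/-- Well timed: for every `k ≥ 1` and every `j > k` there is a depth `k` pair with
a `j` cut. -/
def WellTimed (T : B.PathSpace ≃ B.PathSpace) : Prop :=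
  ∀ k : ℕ, 1 ≤ k → ∀ j : ℕ, k < j →
    ∃ x y : B.PathSpace, B.DepthPair T k x y ∧ B.HasCut T j x y

/-- Very well timed: for every `k ≥ 1` there is a depth `k` pair having a `j` cut
for every `j > k`. -/
def VeryWellTimed (T : B.PathSpace ≃ B.PathSpace) : Prop :=
  ∀ k : ℕ, 1 ≤ k →
    ∃ x y : B.PathSpace, B.DepthPair T k x y ∧ ∀ j : ℕ, k < j → B.HasCut T j x y

/-- Weakly well timed: for infinitely many `k ≥ 1`, for every `j > k` there is a
depth `k` pair with a `j` cut. -/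
def WeaklyWellTimed (T : B.PathSpace ≃ B.PathSpace) : Prop :=
  ∀ K : ℕ, ∃ k : ℕ, K ≤ k ∧ 1 ≤ k ∧ ∀ j : ℕ, k < j →
    ∃ x y : B.PathSpace, B.DepthPair T k x y ∧ B.HasCut T j x y

/-- Untimed: for every `k ≥ 1` there is a `j > k` such that no depth `k` pair has a
`j` cut. -/
def Untimed (T : B.PathSpace ≃ B.PathSpace) : Prop :=
  ∀ k : ℕ, 1 ≤ k → ∃ j : ℕ, k < j ∧
    ∀ x y : B.PathSpace, B.DepthPair T k x y → ¬ B.HasCut T j x y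

/-- Very untimed: for every `k ≥ 1`, no depth `k` pair has a `(k+1)` cut. -/
def VeryUntimed (T : B.PathSpace ≃ B.PathSpace) : Prop :=
  ∀ k : ℕ, 1 ≤ k →
    ∀ x y : B.PathSpace, B.DepthPair T k x y → ¬ B.HasCut T (k + 1) x y

/-- Finite paths from the root to level `n`. -/
def FinPath (n : ℕ) : Type :=
  { f : (i : Fin n) → B.E i.val //
    ∀ (i : ℕ) (h : i + 1 < n), B.tgt (f ⟨i, by omega⟩) = B.src (f ⟨i + 1, h⟩) }

/-- The lexicographic (from the end) order on finite paths to level `n` induced by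
the orders on the edges. -/
def finLT {n : ℕ} (p q : B.FinPath n) : Prop :=
  ∃ (N : ℕ) (h : N < n), B.elt (p.1 ⟨N, h⟩) (q.1 ⟨N, h⟩) ∧
    ∀ (i : ℕ) (hi : i < n), N < i → p.1 ⟨i, hi⟩ = q.1 ⟨i, hi⟩

/-- The finite path `p` to level `n` ends at the vertex `v`. -/
def EndsAt {n : ℕ} (p : B.FinPath n) (v : B.V n) : Prop :=
  ∀ (m : ℕ) (h : n = m + 1), B.tgt (p.1 ⟨m, by omega⟩) = B.castV h v

/-- The initial segment of an infinite path, from the root to level `n`. -/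
def pathInit (x : B.PathSpace) (n : ℕ) : B.FinPath n :=
  ⟨fun i => x.1 i.val, fun i _ => x.2 i⟩

/-- The vertex of an infinite path at level `n`. -/
def pathVert (x : B.PathSpace) (n : ℕ) : B.V n := B.src (x.1 n)

theorem pathInit_endsAt (x : B.PathSpace) (n : ℕ) :
    B.EndsAt (B.pathInit x n) (B.pathVert x n) := by
  intro m h
  subst h
  exact x.2 m

/-- Truncation of a finite path to a lower level. -/
def truncTo {n : ℕ} (k : ℕ) (hk : k ≤ n) (p : B.FinPath n) : B.FinPath k :=
  ⟨fun i => p.1 ⟨i.val, by omega⟩, fun i h => p.2 i (by omega)⟩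

/-- Paths `x, x'` are `k`-equivalent at level `n`: there is an order isomorphism
between the sets of finite paths from the root into their level-`n` vertices which
preserves truncations to level `k` (equality of `k`-basic blocks) and which matches
the initial segment of `x` with the initial segment of `x'` (the "dot" is in the
same place). -/
def KEquivAt (k n : ℕ) (x x' : B.PathSpace) : Prop :=
  ∃ φ : { p : B.FinPath n // B.EndsAt p (B.pathVert x n) } ≃
      { p : B.FinPath n // B.EndsAt p (B.pathVert x' n) },
    (∀ p q, B.finLT p.1 q.1 ↔ B.finLT (φ p).1 (φ q).1) ∧
    (∀ p (i : ℕ) (hik : i < k) (hin : i < n), ((φ p).1).1 ⟨i, hin⟩ = (p.1).1 ⟨i, hin⟩) ∧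
    φ ⟨B.pathInit x n, B.pathInit_endsAt x n⟩ = ⟨B.pathInit x' n, B.pathInit_endsAt x' n⟩

/-- Paths are `k`-equivalent: they agree from the root to level `k` and are
`k`-equivalent at every level `n > k`. -/
def KEquivPaths (k : ℕ) (x x' : B.PathSpace) : Prop :=
  (∀ i : ℕ, i < k → x.1 i = x'.1 i) ∧ ∀ n : ℕ, k < n → B.KEquivAt k n x x'

/-- Standard nonexpansive: for every `k ≥ 1` there is a pair of distinct
`k`-equivalent paths. -/
def SNE : Prop := ∀ k : ℕ, 1 ≤ k → ∃ x x' : B.PathSpace, x ≠ x' ∧ B.KEquivPaths k x x'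

/-!  ### Telescoping  -/

theorem castV_eq_of_heq {m n : ℕ} (h : m = n) {v : B.V m} {w : B.V n} (hw : HEq v w) :
    B.castV h v = w := by
  subst h
  exact eq_of_heq hw

theorem castV_heq {m n : ℕ} (h : m = n) (v : B.V m) : HEq (B.castV h v) v := by
  subst h
  rfl

theorem castV_inj {m n : ℕ} (h : m = n) {v w : B.V m}
    (hvw : B.castV h v = B.castV h w) : v = w := by
  subst h
  exact hvw

def castE {m n : ℕ} (h : m = n) (e : B.E m) : B.E n := h ▸ e

noncomputable def chainFrom (a : ℕ) (v : B.V a) : (i : ℕ) → B.E (a + i)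
  | 0 => (B.hasOut a v).choose
  | i + 1 => (B.hasOut (a + i + 1) (B.tgt (chainFrom a v i))).choose

theorem chainFrom_src_zero (a : ℕ) (v : B.V a) : B.src (B.chainFrom a v 0) = v :=
  (B.hasOut a v).choose_spec

theorem chainFrom_src_succ (a : ℕ) (v : B.V a) (i : ℕ) :
    B.src (B.chainFrom a v (i + 1)) = B.tgt (B.chainFrom a v i) :=
  (B.hasOut (a + i + 1) (B.tgt (B.chainFrom a v i))).choose_spec

noncomputable def chainTo (a : ℕ) : (j : ℕ) → (w : B.V (a + j + 1)) → (i : ℕ) → i ≤ j → B.E (a + i)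
  | 0, w, i, _ => B.castE (by omega : a + 0 = a + i) (B.hasIn a w).choose
  | j + 1, w, i, _ =>
      if h : i ≤ j then chainTo a j (B.src (B.hasIn (a + j + 1) w).choose) i h
      else B.castE (by omega : a + (j + 1) = a + i) (B.hasIn (a + j + 1) w).choose

theorem chainTo_tgt_last (a : ℕ) : ∀ (j : ℕ) (w : B.V (a + j + 1)),
    B.tgt (B.chainTo a j w j le_rfl) = w := by
  intro j w
  cases j with
  | zero =>
      simp only [chainTo]
      exact (B.hasIn a w).choose_spec
  | succ j =>
      simp only [chainTo]
      rw [dif_neg (by omega : ¬ j + 1 ≤ j)]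
      exact (B.hasIn (a + j + 1) w).choose_spec

theorem chainTo_chain (a : ℕ) : ∀ (j : ℕ) (w : B.V (a + j + 1)) (i : ℕ) (h : i + 1 ≤ j)
    (h' : i ≤ j), B.tgt (B.chainTo a j w i h') = B.src (B.chainTo a j w (i + 1) h) := by
  intro j
  induction j with
  | zero => intro w i h h'; omega
  | succ j ih =>
      intro w i h h'
      by_cases hij : i + 1 ≤ j
      · simp only [chainTo]
        rw [dif_pos (by omega : i ≤ j), dif_pos hij]
        exact ih _ i hij (by omega)
      · have hi : i = j := by omega
        subst hi
        simp only [chainTo]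
        rw [dif_pos (le_refl i), dif_neg (by omega : ¬ i + 1 ≤ i)]
        exact B.chainTo_tgt_last a i _


def TelE (a b : ℕ) : Type :=
  { f : (i : Fin (b - a)) → B.E (a + i.val) //
    ∀ (i : ℕ) (h : i + 1 < b - a), B.tgt (f ⟨i, by omega⟩) = B.src (f ⟨i + 1, h⟩) }

def telSrc {a b : ℕ} (hab : a < b) (f : B.TelE a b) : B.V a :=
  B.src (f.1 ⟨0, by omega⟩)

def telTgt {a b : ℕ} (hab : a < b) (f : B.TelE a b) : B.V b :=
  B.castV (by omega : a + (b - a - 1) + 1 = b) (B.tgt (f.1 ⟨b - a - 1, by omega⟩))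

def telLT {a b : ℕ} (f g : B.TelE a b) : Prop :=
  ∃ (N : ℕ) (h : N < b - a), B.elt (f.1 ⟨N, h⟩) (g.1 ⟨N, h⟩) ∧
    ∀ (i : ℕ) (hi : i < b - a), N < i → f.1 ⟨i, hi⟩ = g.1 ⟨i, hi⟩

noncomputable def Telescope (ns : ℕ → ℕ) (hmono : StrictMono ns) (h0 : ns 0 = 0) : BDiagram where
  V l := B.V (ns l)
  E l := B.TelE (ns l) (ns (l + 1))
  fintV l := B.fintV (ns l)
  fintE l := by
    classical
    letI : ∀ i : Fin (ns (l + 1) - ns l), Fintype (B.E (ns l + i.val)) := fun i => B.fintE _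
    exact Subtype.fintype _
  nonV l := B.nonV (ns l)
  rootSubsingleton := by show Subsingleton (B.V (ns 0)); rw [h0]; exact B.rootSubsingleton
  src {l} f := B.telSrc (hmono (Nat.lt_succ_self l)) f
  tgt {l} f := B.telTgt (hmono (Nat.lt_succ_self l)) f
  hasOut := by
    intro l v
    refine ⟨⟨fun i => B.chainFrom (ns l) v i.val,
      fun i h => (B.chainFrom_src_succ (ns l) v i).symm⟩, ?_⟩
    exact B.chainFrom_src_zero (ns l) v
  hasIn := by
    intro l w
    have hab : ns l < ns (l + 1) := hmono (Nat.lt_succ_self l)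
    have hj : ns l + (ns (l + 1) - ns l - 1) + 1 = ns (l + 1) := by omega
    refine ⟨⟨fun i => B.chainTo (ns l) (ns (l + 1) - ns l - 1) (B.castV hj.symm w) i.val
        (by omega), fun i h => B.chainTo_chain _ _ _ i (by omega) (by omega)⟩, ?_⟩
    show B.castV (by omega) (B.tgt (B.chainTo (ns l) (ns (l + 1) - ns l - 1)
      (B.castV hj.symm w) (ns (l + 1) - ns l - 1) (by omega))) = w
    rw [B.chainTo_tgt_last]
    exact B.castV_eq_of_heq _ (B.castV_heq _ w)
  elt {l} f g := B.telLT f g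
  elt_tgt := by
    rintro l f g ⟨N, hN, hlt, hgt⟩
    show B.telTgt _ f = B.telTgt _ g
    unfold telTgt
    refine congrArg (B.castV _) ?_
    rcases eq_or_lt_of_le (show N ≤ ns (l + 1) - ns l - 1 by omega) with h | h
    · subst h
      exact B.elt_tgt _ _ _ hlt
    · exact congrArg B.tgt (hgt _ (by omega) h)
  elt_irrefl := by
    rintro l f ⟨N, h, hlt, -⟩
    exact B.elt_irrefl _ _ hlt
  elt_trans := by
    rintro l f g h ⟨N₁, hN₁, hlt₁, hgt₁⟩ ⟨N₂, hN₂, hlt₂, hgt₂⟩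
    rcases lt_trichotomy N₁ N₂ with hc | hc | hc
    · exact ⟨N₂, hN₂, by rw [hgt₁ N₂ hN₂ hc]; exact hlt₂,
        fun i hi hN => (hgt₁ i hi (by omega)).trans (hgt₂ i hi hN)⟩
    · subst hc
      exact ⟨N₁, hN₁, B.elt_trans _ _ _ _ hlt₁ hlt₂,
        fun i hi hN => (hgt₁ i hi hN).trans (hgt₂ i hi hN)⟩
    · refine ⟨N₁, hN₁, ?_, fun i hi hN => (hgt₁ i hi hN).trans (hgt₂ i hi (by omega))⟩
      rw [← hgt₂ N₁ hN₁ hc]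
      exact hlt₁
  elt_total := by
    intro l f g htgt hne
    classical
    have hab : ns l < ns (l + 1) := hmono (Nat.lt_succ_self l)
    set b := ns (l + 1) - ns l with hb
    have hex : ∃ N, ∃ h : N < b, f.1 ⟨N, h⟩ ≠ g.1 ⟨N, h⟩ := by
      by_contra hco
      push_neg at hco
      exact hne (Subtype.ext (funext fun i => hco i.val i.isLt))
    set P : ℕ → Prop := fun N => ∃ h : N < b, f.1 ⟨N, h⟩ ≠ g.1 ⟨N, h⟩ with hP
    obtain ⟨N₀, hN₀⟩ := hex
    set N := Nat.findGreatest P b with hNdef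
    have hPN : P N := Nat.findGreatest_spec (le_of_lt hN₀.choose) hN₀
    have hafter : ∀ i (hi : i < b), N < i → f.1 ⟨i, hi⟩ = g.1 ⟨i, hi⟩ := by
      intro i hi hNi
      by_contra hcon
      exact Nat.findGreatest_is_greatest hNi (le_of_lt hi) ⟨hi, hcon⟩
    clear_value N
    obtain ⟨hNb, hNne⟩ := hPN
    have htgtN : B.tgt (f.1 ⟨N, hNb⟩) = B.tgt (g.1 ⟨N, hNb⟩) := by
      rcases eq_or_lt_of_le (show N ≤ b - 1 by omega) with h | h
      · -- N is the last index; use equality of targets of the composite edges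
        subst h
        exact B.castV_inj _ htgt
      · have h2 : f.1 ⟨N + 1, by omega⟩ = g.1 ⟨N + 1, by omega⟩ :=
          hafter (N + 1) (by omega) (by omega)
        rw [f.2 N (by omega), g.2 N (by omega), h2]
    rcases B.elt_total _ _ _ htgtN hNne with h | h
    · exact Or.inl ⟨N, hNb, h, hafter⟩
    · exact Or.inr ⟨N, hNb, h, fun i hi hN => (hafter i hi hN).symm⟩

def teleMap (ns : ℕ → ℕ) (hmono : StrictMono ns) (h0 : ns 0 = 0) (x : B.PathSpace) :
    (B.Telescope ns hmono h0).PathSpace :=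
  ⟨fun l => ⟨fun i => x.1 (ns l + i.val), fun i _ => x.2 (ns l + i)⟩, fun l => by
    have hab : ns l < ns (l + 1) := hmono (Nat.lt_succ_self l)
    have hm : ns l + (ns (l + 1) - ns l - 1) + 1 = ns (l + 1) := by omega
    show B.castV _ (B.tgt (x.1 (ns l + (ns (l + 1) - ns l - 1)))) = B.src (x.1 (ns (l + 1) + 0))
    rw [x.2 (ns l + (ns (l + 1) - ns l - 1))]
    exact B.castV_eq_of_heq _ (by rw [hm]; exact HEq.rfl)⟩


/-- Level `n+1` is uniformly ordered: there is a single nonempty block `P` of paths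
from the root to level `n` such that the `n`-basic block at every vertex at level
`n+1` is a positive power of `P`. -/
def UniformlyOrderedLevel (n : ℕ) : Prop :=
  ∃ (p : ℕ) (hp : 0 < p) (P : Fin p → B.FinPath n),
    ∀ v : B.V (n + 1), ∃ (m : ℕ), 0 < m ∧
      ∃ enum : Fin (m * p) ≃ { q : B.FinPath (n + 1) // B.EndsAt q v },
        (∀ i j : Fin (m * p), i < j ↔ B.finLT (enum i).1 (enum j).1) ∧
        (∀ i : Fin (m * p),
          B.truncTo n (Nat.le_succ n) (enum i).1 = P ⟨i.val % p, Nat.mod_lt _ hp⟩)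

/-- The ordinal label of an edge: its position in the linear order on the edges
into its target. -/
noncomputable def edgeLabel {n : ℕ} (e : B.E n) : ℕ := Nat.card { e' : B.E n // B.elt e' e }

/-- Deterministic: for every `n ≥ 1`, distinct edges with the same source at level
`n` have different ordinal labels. -/
def Deterministic : Prop :=
  ∀ n : ℕ, 1 ≤ n → ∀ e f : B.E n, B.src e = B.src f → e ≠ f →
    B.edgeLabel e ≠ B.edgeLabel f

end BDiagram

/-- A Bratteli–Vershik system: a simple, properly ordered ordered Bratteli diagram
together with its Vershik map. -/
structure BVSystem where
  B : BDiagram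
  T : B.PathSpace ≃ B.PathSpace
  proper : B.ProperlyOrdered
  simple : B.Simple
  vershik : B.IsVershik T

/-- Conjugacy of systems: an equivariant homeomorphism of the path spaces taking
minimal paths to minimal paths. -/
def Conjugate (S S' : BVSystem) : Prop :=
  ∃ φ : S.B.PathSpace ≃ S'.B.PathSpace,
    (@Continuous _ _ S.B.pathTop S'.B.pathTop φ) ∧
    (@Continuous _ _ S'.B.pathTop S.B.pathTop φ.symm) ∧
    (∀ x, φ (S.T x) = S'.T (φ x)) ∧
    (∀ x, S.B.IsMinPath x → S'.B.IsMinPath (φ x))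

/-- An odometer: a system whose diagram has exactly one vertex at every level. -/
def IsOdometer (S : BVSystem) : Prop := ∀ n, Subsingleton (S.B.V n)

namespace BDiagram

/-- Two paths agree on the first `k` edges. -/
def Agree (B : BDiagram) (k : ℕ) (x y : B.PathSpace) : Prop := ∀ i, i < k → x.1 i = y.1 i

/-- The path is minimal up to level `j`. -/
def MinTo (B : BDiagram) (j : ℕ) (x : B.PathSpace) : Prop := ∀ i, i < j → B.IsMinEdge (x.1 i)

theorem coord_continuous (B : BDiagram) (i : ℕ) :
    @Continuous _ _ B.pathTop ⊥ (fun x : B.PathSpace => x.1 i) := by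
  letI : ∀ n, TopologicalSpace (B.E n) := fun _ => ⊥
  letI := B.pathTop
  have h1 : Continuous (fun x : B.PathSpace => x.1) := continuous_induced_dom
  exact (continuous_apply i).comp h1

theorem path_compact (B : BDiagram) : @CompactSpace _ B.pathTop := by
  letI : ∀ n, TopologicalSpace (B.E n) := fun _ => ⊥
  haveI : ∀ n, DiscreteTopology (B.E n) := fun _ => ⟨rfl⟩
  haveI : ∀ n, Finite (B.E n) := fun n => @Finite.of_fintype _ (B.fintE n)
  have hc : IsClosed {x : ∀ n, B.E n | ∀ n, B.tgt (x n) = B.src (x (n + 1))} := by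
    have : {x : ∀ n, B.E n | ∀ n, B.tgt (x n) = B.src (x (n + 1))} =
        ⋂ n, {x | B.tgt (x n) = B.src (x (n + 1))} := by ext; simp
    rw [this]
    refine isClosed_iInter fun n => ?_
    have hcont : Continuous (fun x : ∀ n, B.E n => (x n, x (n + 1))) := by fun_prop
    exact (isClosed_discrete {p : B.E n × B.E (n + 1) | B.tgt p.1 = B.src p.2}).preimage hcont
  have := isCompact_iff_compactSpace.1 hc.isCompact
  exact this

theorem isClopen_coord (B : BDiagram) (i : ℕ) (s : Set (B.E i)) :
    @IsClopen _ B.pathTop {x : B.PathSpace | x.1 i ∈ s} := by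
  letI := B.pathTop
  letI : TopologicalSpace (B.E i) := ⊥
  haveI : DiscreteTopology (B.E i) := ⟨rfl⟩
  exact (isClopen_discrete s).preimage (B.coord_continuous i)

theorem isClosed_agree (B : BDiagram) (k : ℕ) :
    letI := B.pathTop
    IsClosed {p : B.PathSpace × B.PathSpace | B.Agree k p.1 p.2} := by
  letI := B.pathTop
  have : {p : B.PathSpace × B.PathSpace | B.Agree k p.1 p.2} =
      ⋂ i, ⋂ (_ : i < k), {p | p.1.1 i = p.2.1 i} := by ext; simp [Agree]
  rw [this]
  refine isClosed_iInter fun i => isClosed_iInter fun _ => ?_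
  letI : TopologicalSpace (B.E i) := ⊥
  haveI : DiscreteTopology (B.E i) := ⟨rfl⟩
  exact isClosed_eq ((B.coord_continuous i).comp continuous_fst)
    ((B.coord_continuous i).comp continuous_snd)

theorem isOpen_agree (B : BDiagram) (k : ℕ) :
    letI := B.pathTop
    IsOpen {p : B.PathSpace × B.PathSpace | B.Agree k p.1 p.2} := by
  letI := B.pathTop
  have : {p : B.PathSpace × B.PathSpace | B.Agree k p.1 p.2} =
      ⋂ i ∈ Finset.range k, {p | p.1.1 i = p.2.1 i} := by ext; simp [Agree]
  rw [this]
  refine isOpen_biInter_finset fun i _ => ?_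
  letI : TopologicalSpace (B.E i) := ⊥
  haveI : DiscreteTopology (B.E i) := ⟨rfl⟩
  have h : Continuous (fun p : B.PathSpace × B.PathSpace => (p.1.1 i, p.2.1 i)) :=
    ((B.coord_continuous i).comp continuous_fst).prodMk
      ((B.coord_continuous i).comp continuous_snd)
  exact (isOpen_discrete {q : B.E i × B.E i | q.1 = q.2}).preimage h

theorem agree_all {B : BDiagram} {x y : B.PathSpace} (h : ∀ k, B.Agree k x y) : x = y :=
  Subtype.ext (funext fun i => h (i + 1) i (Nat.lt_succ_self i))

/-- A decreasing sequence of closed sets with empty intersection is eventually empty. -/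
theorem exists_empty {X : Type*} [TopologicalSpace X] [CompactSpace X] (D : ℕ → Set X)
    (hmono : ∀ i, D (i + 1) ⊆ D i) (hcl : ∀ i, IsClosed (D i)) (hemp : ⋂ i, D i = ∅) :
    ∃ i, D i = ∅ := by
  by_contra hcon
  push Not at hcon
  have := IsCompact.nonempty_iInter_of_sequence_nonempty_isCompact_isClosed D hmono
    hcon (hcl 0).isCompact hcl
  rw [hemp] at this
  exact Set.not_nonempty_empty this

theorem uniform_of_continuous {B B' : BDiagram} (f : B.PathSpace → B'.PathSpace)
    (hf : @Continuous _ _ B.pathTop B'.pathTop f) (k' : ℕ) :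
    ∃ k, ∀ x y, B.Agree k x y → B'.Agree k' (f x) (f y) := by
  letI := B.pathTop
  letI := B'.pathTop
  haveI := B.path_compact
  obtain ⟨k, hk⟩ := exists_empty
    (fun k => {p : B.PathSpace × B.PathSpace | B.Agree k p.1 p.2} ∩
      {p | ¬ B'.Agree k' (f p.1) (f p.2)})
    (fun k p hp => ⟨fun i hi => hp.1 i (by omega), hp.2⟩)
    (fun k => (B.isClosed_agree k).inter
      (((B'.isOpen_agree k').preimage
        ((hf.comp continuous_fst).prodMk (hf.comp continuous_snd))).isClosed_compl))
    (by
      rw [Set.eq_empty_iff_forall_notMem]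
      rintro ⟨x, y⟩ hp
      rw [Set.mem_iInter] at hp
      have : x = y := agree_all fun k => (hp k).1
      subst this
      exact (hp 0).2 fun i _ => rfl)
  refine ⟨k, fun x y h => ?_⟩
  by_contra hcon
  have : ((x, y) : B.PathSpace × B.PathSpace) ∈ (∅ : Set _) := hk ▸ ⟨h, hcon⟩
  exact this

theorem continuous_of_uniform {B B' : BDiagram} (f : B.PathSpace → B'.PathSpace)
    (hf : ∀ k', ∃ k, ∀ x y, B.Agree k x y → B'.Agree k' (f x) (f y)) :
    @Continuous _ _ B.pathTop B'.pathTop f := by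
  letI := B.pathTop
  letI : ∀ n, TopologicalSpace (B'.E n) := fun _ => ⊥
  haveI : ∀ n, DiscreteTopology (B'.E n) := fun _ => ⟨rfl⟩
  refine continuous_induced_rng.2 (continuous_pi fun i => ?_)
  refine continuous_iff_continuousAt.2 fun x => ?_
  obtain ⟨k, hk⟩ := hf (i + 1)
  have hop : IsOpen {y : B.PathSpace | B.Agree k x y} :=
    (B.isOpen_agree k).preimage (Continuous.prodMk_right x)
  have : (fun y => (Subtype.val ∘ f) y i) =ᶠ[nhds x] fun _ => (f x).1 i := by
    filter_upwards [hop.mem_nhds (fun i _ => rfl)] with y hy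
    exact (hk x y hy i (Nat.lt_succ_self i)).symm
  exact continuousAt_const.congr this.symm

theorem minTo_uniform {B B' : BDiagram} (hB : B.ProperlyOrdered)
    (f : B.PathSpace → B'.PathSpace) (hf : @Continuous _ _ B.pathTop B'.pathTop f)
    (hmin : ∀ x, B.IsMinPath x → B'.IsMinPath (f x)) (j' : ℕ) :
    ∃ j, ∀ x, B.MinTo j x → B'.MinTo j' (f x) := by
  letI := B.pathTop
  letI := B'.pathTop
  haveI := B.path_compact
  have hcl : ∀ (C : BDiagram) (j : ℕ), @IsClopen _ C.pathTop {x | C.MinTo j x} := by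
    intro C j
    letI := C.pathTop
    have : {x : C.PathSpace | C.MinTo j x} =
      ⋂ i ∈ Finset.range j, {x | x.1 i ∈ {e | C.IsMinEdge e}} := by ext; simp [MinTo]
    rw [this]
    exact isClopen_biInter_finset fun i _ => C.isClopen_coord i _
  obtain ⟨j, hj⟩ := exists_empty
    (fun j => {x | B.MinTo j x} ∩ {x | ¬ B'.MinTo j' (f x)})
    (fun k p hp => ⟨fun i hi => hp.1 i (by omega), hp.2⟩)
    (fun k => (hcl B k).isClosed.inter (((hcl B' j').isOpen.preimage hf).isClosed_compl))
    (by
      rw [Set.eq_empty_iff_forall_notMem]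
      rintro x hp
      rw [Set.mem_iInter] at hp
      refine (hp 0).2 fun i _ => ?_
      exact hmin x (fun n => (hp (n + 1)).1 n (Nat.lt_succ_self n)) i)
  refine ⟨j, fun x h => ?_⟩
  by_contra hcon
  have : x ∈ (∅ : Set _) := hj ▸ ⟨h, hcon⟩
  exact this

theorem iterZ_equivariant {B B' : BDiagram} (T : B.PathSpace ≃ B.PathSpace)
    (T' : B'.PathSpace ≃ B'.PathSpace) (φ : B.PathSpace ≃ B'.PathSpace)
    (h : ∀ x, φ (T x) = T' (φ x)) (m : ℤ) (x : B.PathSpace) :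
    φ (B.iterZ T m x) = B'.iterZ T' m (φ x) := by
  have hT : T' = φ.permCongr T := by
    ext1 y
    have := h (φ.symm y)
    simpa using this.symm
  have hm : φ.permCongr ((T : Equiv.Perm B.PathSpace) ^ m) = (φ.permCongr T : Equiv.Perm _) ^ m :=
    map_zpow φ.permCongrHom T m
  unfold iterZ
  rw [hT, ← hm]
  simp

theorem sameCoding_mono {B : BDiagram} {T : B.PathSpace ≃ B.PathSpace} {a b : ℕ} (hab : a ≤ b)
    {x y : B.PathSpace} (h : B.SameCoding T b x y) : B.SameCoding T a x y :=
  fun m i hi => h m i (by omega)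

theorem hasCut_mono {B : BDiagram} {T : B.PathSpace ≃ B.PathSpace} {a b : ℕ} (hab : a ≤ b)
    {x y : B.PathSpace} (h : B.HasCut T b x y) : B.HasCut T a x y := by
  obtain ⟨m, h1, h2⟩ := h
  exact ⟨m, fun i hi => h1 i (by omega), fun i hi => h2 i (by omega)⟩

theorem exists_depth {B : BDiagram} {T : B.PathSpace ≃ B.PathSpace} {a b : ℕ}
    {x y : B.PathSpace} (ha : B.SameCoding T a x y) (hb : ¬ B.SameCoding T b x y) :
    ∃ k, a ≤ k ∧ k < b ∧ B.DepthPair T k x y := by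
  classical
  have hne : x ≠ y := by
    rintro rfl
    exact hb fun _ _ _ => rfl
  have hex : ∃ n, ¬ B.SameCoding T n x y := ⟨b, hb⟩
  have h1 := Nat.find_spec hex
  have h2 := Nat.find_min' hex hb
  have h3 : a < Nat.find hex := by
    by_contra hcon
    exact h1 (sameCoding_mono (by omega) ha)
  obtain ⟨k, hk⟩ : ∃ k, Nat.find hex = k + 1 := ⟨Nat.find hex - 1, by omega⟩
  refine ⟨k, by omega, by omega, hne, ?_, hk ▸ h1⟩
  by_contra hcon
  exact Nat.find_min hex (by omega : k < Nat.find hex) hcon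

end BDiagram

open BDiagram

theorem conj_symm {S S' : BVSystem} (h : Conjugate S S') : Conjugate S' S := by
  obtain ⟨φ, h1, h2, h3, h4⟩ := h
  refine ⟨φ.symm, h2, by simpa using h1, fun x => ?_, fun y hy => ?_⟩
  · rw [Equiv.symm_apply_eq, h3]; simp
  · obtain ⟨x0, hx0, -⟩ := S.proper.1
    have : y = φ x0 := S'.proper.1.unique hy (h4 x0 hx0)
    rw [this]; simpa using hx0

theorem wwt_of_conj {S S' : BVSystem} (h : Conjugate S S')
    (hw : S.B.WeaklyWellTimed S.T) : S'.B.WeaklyWellTimed S'.T := by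
  classical
  obtain ⟨φ, h1, h2, h3, h4⟩ := h
  intro K'
  by_contra hcon
  push Not at hcon
  obtain ⟨k0, hk0⟩ := uniform_of_continuous φ h1 (K' + 1)
  obtain ⟨k, hk, hk1, hgood⟩ := hw k0
  obtain ⟨k1, hk1'⟩ := uniform_of_continuous φ.symm h2 (k + 1)
  have hch : ∀ d : ℕ, ∃ j, K' + 1 ≤ d → ∀ x y, S'.B.DepthPair S'.T d x y → ¬ S'.B.HasCut S'.T j x y := by
    intro d
    by_cases hd : K' + 1 ≤ d
    · obtain ⟨j, -, hj⟩ := hcon d (by omega) (by omega)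
      exact ⟨j, fun _ => hj⟩
    · exact ⟨0, fun h => absurd h hd⟩
  choose jf hjf using hch
  set j' := (Finset.range k1).sup jf with hj'
  obtain ⟨j, hj⟩ := minTo_uniform S.proper φ h1 h4 j'
  obtain ⟨x, y, ⟨hne, hs, hns⟩, m, hc1, hc2⟩ := hgood (max j (k + 1)) (by omega)
  have heq := iterZ_equivariant S.T S'.T φ h3
  have hs' : S'.B.SameCoding S'.T (K' + 1) (φ x) (φ y) := by
    intro m i hi
    rw [← heq, ← heq]
    exact hk0 _ _ (fun i hi => hs m i (by omega)) i hi
  have hns' : ¬ S'.B.SameCoding S'.T k1 (φ x) (φ y) := by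
    intro hc
    apply hns
    intro m i hi
    have := hk1' (φ (S.B.iterZ S.T m x)) (φ (S.B.iterZ S.T m y)) (by
      rw [heq, heq]; exact fun i hi => hc m i hi) i hi
    simpa using this
  obtain ⟨d, hd1, hd2, hd⟩ := exists_depth hs' hns'
  refine hjf d hd1 _ _ hd (hasCut_mono (Finset.le_sup (f := jf) (Finset.mem_range.2 hd2))
    ⟨m, ?_, ?_⟩)
  · rw [← heq]; exact hj _ fun i hi => hc1 i (by omega)
  · rw [← heq]; exact hj _ fun i hi => hc2 i (by omega)

namespace BDiagram

theorem edge_nonempty (B : BDiagram) (n : ℕ) : Nonempty (B.E n) := by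
  obtain ⟨v⟩ := B.nonV n
  exact ⟨(B.hasOut n v).choose⟩

/-- Every edge is reached by a chain of edges from the root. -/
theorem exists_chain (B : BDiagram) : ∀ (b : ℕ) (e : B.E b),
    ∃ g : ∀ i, B.E i, (∀ i, i < b → B.tgt (g i) = B.src (g (i + 1))) ∧ g b = e := by
  intro b
  induction b with
  | zero =>
    intro e
    exact ⟨Function.update (fun i => (B.edge_nonempty i).some) 0 e, fun i hi => by omega, by simp⟩
  | succ b ih =>
    intro e
    obtain ⟨e0, he0⟩ := B.hasIn b (B.src e)
    obtain ⟨g, hg, hgb⟩ := ih e0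
    refine ⟨Function.update g (b + 1) e, fun i hi => ?_, by simp⟩
    rw [Function.update_of_ne (by omega)]
    rcases eq_or_lt_of_le (show i ≤ b by omega) with h | h
    · subst h
      rw [Function.update_self, hgb, he0]
    · rw [Function.update_of_ne (by omega)]
      exact hg i h

/-- Replace an edge of a path by another one with the same target. -/
theorem exists_replace (B : BDiagram) (x : B.PathSpace) (n : ℕ) (e : B.E n)
    (he : B.tgt e = B.tgt (x.1 n)) :
    ∃ z : B.PathSpace, z.1 n = e ∧ ∀ i, n < i → z.1 i = x.1 i := by
  obtain ⟨g, hg, hgn⟩ := B.exists_chain n e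
  refine ⟨⟨fun i => if i ≤ n then g i else x.1 i, fun i => ?_⟩, by simpa using hgn,
    fun i hi => if_neg (by omega)⟩
  rcases lt_trichotomy i n with h | h | h
  · simp only [if_pos h.le, if_pos (show i + 1 ≤ n from h)]
    exact hg i h
  · subst h
    simp only [le_refl, if_true, if_neg (show ¬ i + 1 ≤ i by omega), hgn, he]
    exact x.2 i
  · simp only [if_neg (show ¬ i ≤ n by omega), if_neg (show ¬ i + 1 ≤ n by omega)]
    exact x.2 i

theorem exists_band (ns : ℕ → ℕ) (hmono : StrictMono ns) (h0 : ns 0 = 0) (n : ℕ) :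
    ∃ l, ns l ≤ n ∧ n < ns (l + 1) := by
  induction n with
  | zero =>
    have := hmono (Nat.lt_add_one 0)
    exact ⟨0, by omega, by omega⟩
  | succ n ih =>
    obtain ⟨l, h1, h2⟩ := ih
    by_cases h : n + 1 < ns (l + 1)
    · exact ⟨l, by omega, h⟩
    · have := hmono (Nat.lt_add_one (l + 1))
      exact ⟨l + 1, by omega, by omega⟩

theorem exists_band_add (ns : ℕ → ℕ) (hmono : StrictMono ns) (h0 : ns 0 = 0) (n : ℕ) :
    ∃ l i, i < ns (l + 1) - ns l ∧ n = ns l + i := by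
  obtain ⟨l, h1, h2⟩ := exists_band ns hmono h0 n
  exact ⟨l, n - ns l, by omega, by omega⟩

theorem band_unique (ns : ℕ → ℕ) (hmono : StrictMono ns) {l l' n : ℕ} (h1 : ns l ≤ n)
    (h2 : n < ns (l + 1)) (h1' : ns l' ≤ n) (h2' : n < ns (l' + 1)) : l = l' := by
  rcases lt_trichotomy l l' with h | h | h
  · have := hmono.monotone (show l + 1 ≤ l' from h)
    omega
  · exact h
  · have := hmono.monotone (show l' + 1 ≤ l from h)
    omega

theorem castE_edge_congr (B : BDiagram) (ns : ℕ → ℕ) (y : ∀ l, B.TelE (ns l) (ns (l + 1)))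
    {l l' i i' n : ℕ} (hl : l = l') (hi : i < ns (l + 1) - ns l) (hi' : i' < ns (l' + 1) - ns l')
    (h : ns l + i = n) (h' : ns l' + i' = n) :
    B.castE h ((y l).1 ⟨i, hi⟩) = B.castE h' ((y l').1 ⟨i', hi'⟩) := by
  subst hl
  have : i = i' := by omega
  subst this
  rfl

theorem tgt_castE (B : BDiagram) {m n : ℕ} (h : m = n) (e : B.E m) :
    B.tgt (B.castE h e) = B.castV (by omega) (B.tgt e) := by
  subst h
  rfl

theorem src_castE (B : BDiagram) {m n : ℕ} (h : m = n) (e : B.E m) :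
    B.src (B.castE h e) = B.castV h (B.src e) := by
  subst h
  rfl

theorem castV_castV (B : BDiagram) {m n p : ℕ} (h : m = n) (h' : n = p) (v : B.V m) :
    B.castV h' (B.castV h v) = B.castV (h.trans h') v := by
  subst h
  subst h'
  rfl

theorem teleMap_injective (B : BDiagram) (ns : ℕ → ℕ) (hmono : StrictMono ns) (h0 : ns 0 = 0) :
    Function.Injective (B.teleMap ns hmono h0) := by
  intro x y hxy
  refine Subtype.ext (funext fun n => ?_)
  obtain ⟨l, i, hi, rfl⟩ := exists_band_add ns hmono h0 n
  have h1 : (B.teleMap ns hmono h0 x).1 l = (B.teleMap ns hmono h0 y).1 l := by rw [hxy]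
  exact congrFun (congrArg Subtype.val h1) ⟨i, hi⟩

theorem teleMap_surjective (B : BDiagram) (ns : ℕ → ℕ) (hmono : StrictMono ns) (h0 : ns 0 = 0) :
    Function.Surjective (B.teleMap ns hmono h0) := by
  rintro ⟨y, hy⟩
  change ∀ l, B.TelE (ns l) (ns (l + 1)) at y
  choose lev hlev1 hlev2 using exists_band ns hmono h0
  let x : ∀ n, B.E n := fun n =>
    B.castE (by have := hlev1 n; omega : ns (lev n) + (n - ns (lev n)) = n)
      ((y (lev n)).1 ⟨n - ns (lev n), by have := hlev1 n; have := hlev2 n; omega⟩)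
  have hx : ∀ (l i n : ℕ) (hi : i < ns (l + 1) - ns l) (h : ns l + i = n),
      x n = B.castE h ((y l).1 ⟨i, hi⟩) := by
    intro l i n hi h
    exact B.castE_edge_congr ns y
      (band_unique ns hmono (hlev1 n) (hlev2 n) (by omega) (by omega)) _ _ _ _
  refine ⟨⟨x, fun n => ?_⟩, ?_⟩
  · obtain ⟨l, i, hi, rfl⟩ := exists_band_add ns hmono h0 n
    rw [hx l i _ hi rfl]
    by_cases hi' : i + 1 < ns (l + 1) - ns l
    · rw [hx l (i + 1) _ hi' (by omega)]
      exact (y l).2 i hi'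
    · have hw := hmono (Nat.lt_add_one (l + 1))
      have hw0 := hmono (Nat.lt_add_one l)
      have hc : ns (l + 1) + 0 = ns l + i + 1 := by omega
      rw [hx (l + 1) 0 _ (by omega) hc, src_castE]
      have p1 : ns (l + 1) - ns l - 1 < ns (l + 1) - ns l := by omega
      have p2 : 0 < ns (l + 1 + 1) - ns (l + 1) := by omega
      have p3 : ns l + (ns (l + 1) - ns l - 1) + 1 = ns (l + 1) := by omega
      have h1 : B.castV p3 (B.tgt ((y l).1 ⟨ns (l + 1) - ns l - 1, p1⟩)) =
        B.src ((y (l + 1)).1 ⟨0, p2⟩) := hy l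
      have hie : i = ns (l + 1) - ns l - 1 := by omega
      subst hie
      refine Eq.trans ?_ (congrArg (B.castV hc) h1)
      rw [castV_castV, tgt_castE]
  · refine Subtype.ext (funext fun l => Subtype.ext (funext fun i => ?_))
    exact hx l i.1 _ i.2 rfl

/-- The telescoping bijection. -/
noncomputable def teleEquiv (B : BDiagram) (ns : ℕ → ℕ) (hmono : StrictMono ns) (h0 : ns 0 = 0) :
    B.PathSpace ≃ (B.Telescope ns hmono h0).PathSpace :=
  Equiv.ofBijective (B.teleMap ns hmono h0)
    ⟨B.teleMap_injective ns hmono h0, B.teleMap_surjective ns hmono h0⟩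

theorem tele_agree (B : BDiagram) (ns : ℕ → ℕ) (hmono : StrictMono ns) (h0 : ns 0 = 0)
    (k : ℕ) (x y : B.PathSpace) :
    (B.Telescope ns hmono h0).Agree k (B.teleEquiv ns hmono h0 x) (B.teleEquiv ns hmono h0 y) ↔
      B.Agree (ns k) x y := by
  constructor
  · intro h n hn
    obtain ⟨l, i, hi, rfl⟩ := exists_band_add ns hmono h0 n
    have hl : l < k := hmono.lt_iff_lt.1 (by omega)
    exact congrFun (congrArg Subtype.val (h l hl)) ⟨i, hi⟩
  · intro h l hl
    refine Subtype.ext (funext fun i => h (ns l + i.1) ?_)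
    have := hmono.monotone (show l + 1 ≤ k from hl)
    have := i.2
    omega

theorem tele_minEdge (B : BDiagram) (ns : ℕ → ℕ) (hmono : StrictMono ns) (h0 : ns 0 = 0)
    (l : ℕ) (x : B.PathSpace) :
    (B.Telescope ns hmono h0).IsMinEdge ((B.teleEquiv ns hmono h0 x).1 l) ↔
      ∀ i, i < ns (l + 1) - ns l → B.IsMinEdge (x.1 (ns l + i)) := by
  constructor
  · intro h i hi e' he'
    obtain ⟨z, hz1, hz2⟩ := B.exists_replace x (ns l + i) e' (B.elt_tgt _ _ _ he')
    refine h ((B.teleEquiv ns hmono h0 z).1 l) ⟨i, hi, ?_, fun i' _ hii => hz2 _ (Nat.add_lt_add_left hii _)⟩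
    show B.elt (z.1 (ns l + i)) (x.1 (ns l + i))
    rw [hz1]
    exact he'
  · rintro h e' ⟨N, hN, hlt, -⟩
    exact h N hN _ hlt

theorem tele_maxEdge (B : BDiagram) (ns : ℕ → ℕ) (hmono : StrictMono ns) (h0 : ns 0 = 0)
    (l : ℕ) (x : B.PathSpace) :
    (B.Telescope ns hmono h0).IsMaxEdge ((B.teleEquiv ns hmono h0 x).1 l) ↔
      ∀ i, i < ns (l + 1) - ns l → B.IsMaxEdge (x.1 (ns l + i)) := by
  constructor
  · intro h i hi e' he'
    obtain ⟨z, hz1, hz2⟩ := B.exists_replace x (ns l + i) e' (B.elt_tgt _ _ _ he').symm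
    refine h ((B.teleEquiv ns hmono h0 z).1 l) ⟨i, hi, ?_, fun i' _ hii =>
      (hz2 _ (Nat.add_lt_add_left hii _)).symm⟩
    show B.elt (x.1 (ns l + i)) (z.1 (ns l + i))
    rw [hz1]
    exact he'
  · rintro h e' ⟨N, hN, hlt, -⟩
    exact h N hN _ hlt

theorem tele_minTo (B : BDiagram) (ns : ℕ → ℕ) (hmono : StrictMono ns) (h0 : ns 0 = 0)
    (k : ℕ) (x : B.PathSpace) :
    (B.Telescope ns hmono h0).MinTo k (B.teleEquiv ns hmono h0 x) ↔ B.MinTo (ns k) x := by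
  constructor
  · intro h n hn
    obtain ⟨l, i, hi, rfl⟩ := exists_band_add ns hmono h0 n
    have hl : l < k := hmono.lt_iff_lt.1 (by omega)
    exact (B.tele_minEdge ns hmono h0 l x).1 (h l hl) i hi
  · intro h l hl
    refine (B.tele_minEdge ns hmono h0 l x).2 fun i hi => h _ ?_
    have := hmono.monotone (show l + 1 ≤ k from hl)
    omega

theorem tele_minPath (B : BDiagram) (ns : ℕ → ℕ) (hmono : StrictMono ns) (h0 : ns 0 = 0)
    (x : B.PathSpace) :
    (B.Telescope ns hmono h0).IsMinPath (B.teleEquiv ns hmono h0 x) ↔ B.IsMinPath x := by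
  constructor
  · intro h n
    obtain ⟨l, i, hi, rfl⟩ := exists_band_add ns hmono h0 n
    exact (B.tele_minEdge ns hmono h0 l x).1 (h l) i hi
  · intro h l
    exact (B.tele_minEdge ns hmono h0 l x).2 fun i hi => h _

theorem tele_maxPath (B : BDiagram) (ns : ℕ → ℕ) (hmono : StrictMono ns) (h0 : ns 0 = 0)
    (x : B.PathSpace) :
    (B.Telescope ns hmono h0).IsMaxPath (B.teleEquiv ns hmono h0 x) ↔ B.IsMaxPath x := by
  constructor
  · intro h n
    obtain ⟨l, i, hi, rfl⟩ := exists_band_add ns hmono h0 n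
    exact (B.tele_maxEdge ns hmono h0 l x).1 (h l) i hi
  · intro h l
    exact (B.tele_maxEdge ns hmono h0 l x).2 fun i hi => h _

theorem tele_pathLT (B : BDiagram) (ns : ℕ → ℕ) (hmono : StrictMono ns) (h0 : ns 0 = 0)
    (x y : B.PathSpace) :
    (B.Telescope ns hmono h0).pathLT (B.teleEquiv ns hmono h0 x) (B.teleEquiv ns hmono h0 y) ↔
      B.pathLT x y := by
  constructor
  · rintro ⟨l, ⟨N, hN, hlt, heq⟩, hl⟩
    refine ⟨ns l + N, hlt, fun n hn => ?_⟩
    obtain ⟨l', i, hi, rfl⟩ := exists_band_add ns hmono h0 n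
    rcases lt_trichotomy l l' with h | h | h
    · exact congrFun (congrArg Subtype.val (hl l' h)) ⟨i, hi⟩
    · subst h
      exact heq i hi (by omega)
    · have := hmono.monotone (show l' + 1 ≤ l from h)
      omega
  · rintro ⟨n, hlt, heq⟩
    obtain ⟨l, i, hi, rfl⟩ := exists_band_add ns hmono h0 n
    refine ⟨l, ⟨i, hi, hlt, fun i' _ hii => heq _ (Nat.add_lt_add_left hii _)⟩, fun l' hl' => ?_⟩
    refine Subtype.ext (funext fun i' => heq (ns l' + i'.1) ?_)
    have := hmono.monotone (show l + 1 ≤ l' from hl')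
    omega

theorem tele_proper (B : BDiagram) (ns : ℕ → ℕ) (hmono : StrictMono ns) (h0 : ns 0 = 0)
    (hB : B.ProperlyOrdered) : (B.Telescope ns hmono h0).ProperlyOrdered := by
  obtain ⟨⟨x, hx, hxu⟩, ⟨y, hy, hyu⟩⟩ := hB
  refine ⟨⟨B.teleEquiv ns hmono h0 x, (B.tele_minPath ns hmono h0 x).2 hx, fun z hz => ?_⟩,
    ⟨B.teleEquiv ns hmono h0 y, (B.tele_maxPath ns hmono h0 y).2 hy, fun z hz => ?_⟩⟩
  · obtain ⟨z, rfl⟩ := (B.teleEquiv ns hmono h0).surjective z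
    rw [hxu z ((B.tele_minPath ns hmono h0 z).1 hz)]
  · obtain ⟨z, rfl⟩ := (B.teleEquiv ns hmono h0).surjective z
    rw [hyu z ((B.tele_maxPath ns hmono h0 z).1 hz)]

theorem tele_vershik (B : BDiagram) (ns : ℕ → ℕ) (hmono : StrictMono ns) (h0 : ns 0 = 0)
    (T : B.PathSpace ≃ B.PathSpace) (hT : B.IsVershik T) :
    (B.Telescope ns hmono h0).IsVershik ((B.teleEquiv ns hmono h0).permCongr T) := by
  constructor
  · intro x hx
    obtain ⟨x, rfl⟩ := (B.teleEquiv ns hmono h0).surjective x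
    rw [B.tele_maxPath] at hx
    obtain ⟨h1, h2⟩ := hT.1 x hx
    rw [Equiv.permCongr_apply, Equiv.symm_apply_apply]
    refine ⟨(B.tele_pathLT ns hmono h0 _ _).2 h1, fun z hz => ?_⟩
    obtain ⟨z, rfl⟩ := (B.teleEquiv ns hmono h0).surjective z
    rw [B.tele_pathLT] at hz ⊢
    exact h2 z hz
  · intro x hx
    obtain ⟨x, rfl⟩ := (B.teleEquiv ns hmono h0).surjective x
    rw [B.tele_maxPath] at hx
    rw [Equiv.permCongr_apply, Equiv.symm_apply_apply, B.tele_minPath]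
    exact hT.2 x hx

/-- Complete connections from level `a` to level `c + 1`. -/
def FullConn (B : BDiagram) (a c : ℕ) : Prop :=
  ∀ (v : B.V a) (w : B.V (c + 1)),
    ∃ f : ∀ i, B.E i, B.SegOn f a (c + 1) ∧ B.src (f a) = v ∧ B.tgt (f c) = w

theorem fullConn_succ {B : BDiagram} {a c : ℕ} (hac : a ≤ c) (h : B.FullConn a c) :
    B.FullConn a (c + 1) := by
  intro v w
  obtain ⟨e, he⟩ := B.hasIn (c + 1) w
  obtain ⟨f, hf, hv, hw⟩ := h v (B.src e)
  refine ⟨Function.update f (c + 1) e, fun i hai hi => ?_, ?_, by simpa using he⟩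
  · rw [Function.update_of_ne (by omega)]
    rcases eq_or_lt_of_le (show i ≤ c by omega) with h | h
    · subst h
      rw [Function.update_self, hw]
    · rw [Function.update_of_ne (by omega)]
      exact hf i hai (by omega)
  · rw [Function.update_of_ne (by omega)]
    exact hv

theorem fullConn_mono {B : BDiagram} {a c d : ℕ} (hac : a ≤ c) (hcd : c ≤ d)
    (h : B.FullConn a c) : B.FullConn a d := by
  induction d, hcd using Nat.le_induction with
  | base => exact h
  | succ d hd ih => exact fullConn_succ (by omega) ih

theorem tele_simple (B : BDiagram) (ns : ℕ → ℕ) (hmono : StrictMono ns) (h0 : ns 0 = 0)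
    (h : ∀ l c, ns (l + 1) = c + 1 → B.FullConn (ns l) c) :
    (B.Telescope ns hmono h0).Simple := by
  refine ⟨id, strictMono_id, rfl, ?_⟩
  intro l c hc
  obtain rfl : l = c := by simpa using hc
  intro v w
  change B.V (ns l) at v
  change B.V (ns (l + 1)) at w
  have hlt := hmono (Nat.lt_add_one l)
  have hd : ns (l + 1) = ns l + (ns (l + 1) - ns l - 1) + 1 := by omega
  obtain ⟨f, hf, hv, hw⟩ := h l _ hd v (B.castV hd w)
  let e : B.TelE (ns l) (ns (l + 1)) :=
    ⟨fun i => f (ns l + i.1), fun i hi => hf (ns l + i) (by omega) (by omega)⟩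
  let F : ∀ i, (B.Telescope ns hmono h0).E i :=
    Function.update (fun i => ((B.Telescope ns hmono h0).edge_nonempty i).some) l e
  have hF : F l = e := Function.update_self _ _ _
  refine ⟨F, fun i h1 h2 => ?_, ?_, ?_⟩
  · simp only [id] at h1
    omega
  · exact (congrArg (B.Telescope ns hmono h0).src hF).trans hv
  · refine (congrArg (B.Telescope ns hmono h0).tgt hF).trans ?_
    show B.castV _ (B.tgt (f (ns l + (ns (l + 1) - ns l - 1)))) = w
    rw [hw, castV_castV]
    rfl

theorem tele_continuous (B : BDiagram) (ns : ℕ → ℕ) (hmono : StrictMono ns) (h0 : ns 0 = 0) :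
    @Continuous _ _ B.pathTop (B.Telescope ns hmono h0).pathTop (B.teleEquiv ns hmono h0) :=
  continuous_of_uniform _ fun k' => ⟨ns k', fun x y h => (B.tele_agree ns hmono h0 k' x y).2 h⟩

theorem tele_symm_continuous (B : BDiagram) (ns : ℕ → ℕ) (hmono : StrictMono ns) (h0 : ns 0 = 0) :
    @Continuous _ _ (B.Telescope ns hmono h0).pathTop B.pathTop (B.teleEquiv ns hmono h0).symm := by
  refine continuous_of_uniform _ fun k' => ⟨k', fun x y h => ?_⟩
  obtain ⟨x, rfl⟩ := (B.teleEquiv ns hmono h0).surjective x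
  obtain ⟨y, rfl⟩ := (B.teleEquiv ns hmono h0).surjective y
  rw [B.tele_agree] at h
  rw [Equiv.symm_apply_apply, Equiv.symm_apply_apply]
  intro i hi
  have := hmono.le_apply (x := k')
  exact h i (by omega)

theorem tele_sameCoding (B : BDiagram) (ns : ℕ → ℕ) (hmono : StrictMono ns) (h0 : ns 0 = 0)
    (T : B.PathSpace ≃ B.PathSpace) (k : ℕ) (x y : B.PathSpace) :
    (B.Telescope ns hmono h0).SameCoding ((B.teleEquiv ns hmono h0).permCongr T) k
      (B.teleEquiv ns hmono h0 x) (B.teleEquiv ns hmono h0 y) ↔ B.SameCoding T (ns k) x y := by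
  have heq := iterZ_equivariant T ((B.teleEquiv ns hmono h0).permCongr T)
    (B.teleEquiv ns hmono h0) (fun x => by simp [Equiv.permCongr_apply])
  refine forall_congr' fun m => ?_
  rw [← heq, ← heq]
  exact B.tele_agree ns hmono h0 k _ _

theorem tele_hasCut (B : BDiagram) (ns : ℕ → ℕ) (hmono : StrictMono ns) (h0 : ns 0 = 0)
    (T : B.PathSpace ≃ B.PathSpace) (k : ℕ) (x y : B.PathSpace) :
    (B.Telescope ns hmono h0).HasCut ((B.teleEquiv ns hmono h0).permCongr T) k
      (B.teleEquiv ns hmono h0 x) (B.teleEquiv ns hmono h0 y) ↔ B.HasCut T (ns k) x y := by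
  have heq := iterZ_equivariant T ((B.teleEquiv ns hmono h0).permCongr T)
    (B.teleEquiv ns hmono h0) (fun x => by simp [Equiv.permCongr_apply])
  refine exists_congr fun m => ?_
  rw [← heq, ← heq]
  exact and_congr (B.tele_minTo ns hmono h0 k _) (B.tele_minTo ns hmono h0 k _)

end BDiagram

/-- The telescoped system. -/
noncomputable def teleSystem (S : BVSystem) (ns : ℕ → ℕ) (hmono : StrictMono ns) (h0 : ns 0 = 0)
    (h : ∀ l c, ns (l + 1) = c + 1 → S.B.FullConn (ns l) c) : BVSystem where
  B := S.B.Telescope ns hmono h0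
  T := (S.B.teleEquiv ns hmono h0).permCongr S.T
  proper := S.B.tele_proper ns hmono h0 S.proper
  simple := S.B.tele_simple ns hmono h0 h
  vershik := S.B.tele_vershik ns hmono h0 S.T S.vershik

theorem conj_tele (S : BVSystem) (ns : ℕ → ℕ) (hmono : StrictMono ns) (h0 : ns 0 = 0)
    (h : ∀ l c, ns (l + 1) = c + 1 → S.B.FullConn (ns l) c) :
    Conjugate S (teleSystem S ns hmono h0 h) :=
  ⟨S.B.teleEquiv ns hmono h0, S.B.tele_continuous ns hmono h0,
    S.B.tele_symm_continuous ns hmono h0,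
    fun x => by
      show S.B.teleEquiv ns hmono h0 (S.T x) = S.B.teleEquiv ns hmono h0
        (S.T ((S.B.teleEquiv ns hmono h0).symm (S.B.teleEquiv ns hmono h0 x)))
      rw [Equiv.symm_apply_apply],
    fun x hx => (S.B.tele_minPath ns hmono h0 x).2 hx⟩

theorem fullConn_comp {B : BDiagram} {s : ℕ → ℕ} (hs : StrictMono s)
    (hfull : ∀ l c, s (l + 1) = c + 1 → B.FullConn (s l) c) {t : ℕ → ℕ} (ht : StrictMono t)
    (l c : ℕ) (h : s (t (l + 1)) = c + 1) : B.FullConn (s (t l)) c := by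
  have h1 := hs (Nat.lt_add_one (t l))
  have h2 := hs.monotone (show t l + 1 ≤ t (l + 1) from ht (Nat.lt_add_one l))
  obtain ⟨d, hd⟩ : ∃ d, s (t l + 1) = d + 1 := ⟨s (t l + 1) - 1, by omega⟩
  exact fullConn_mono (c := d) (by omega) (by omega) (hfull _ _ hd)

theorem exists_wellTimed (S : BVSystem) (hw : S.B.WeaklyWellTimed S.T) :
    ∃ S' : BVSystem, Conjugate S S' ∧ S'.B.WellTimed S'.T := by
  obtain ⟨s, hs, hs0, hfull⟩ := S.simple
  choose G hG1 hG2 hG3 using hw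
  let t : ℕ → ℕ := fun l => Nat.rec 0 (fun _ r => r + 1 + G (s r)) l
  have ht0 : t 0 = 0 := rfl
  have htS : ∀ l, t (l + 1) = t l + 1 + G (s (t l)) := fun l => rfl
  have ht : StrictMono t := strictMono_nat_of_lt_succ fun l => by rw [htS]; omega
  have hn : StrictMono (fun l => s (t l)) := hs.comp ht
  have hn0 : (fun l => s (t l)) 0 = 0 := by simp only [ht0, hs0]
  refine ⟨teleSystem S (fun l => s (t l)) hn hn0
    (fun l c h => fullConn_comp hs hfull ht l c h), conj_tele _ _ _ _ _, ?_⟩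
  intro l hl j hj
  have hb1 := hG1 (s (t l))
  have hb2 : G (s (t l)) < s (t (l + 1)) := by
    have := hs.le_apply (x := t (l + 1))
    rw [htS] at this ⊢
    omega
  have hb3 : s (t (l + 1)) ≤ s (t j) := hn.monotone (show l + 1 ≤ j from hj)
  obtain ⟨x, y, ⟨hne, hsc, hnsc⟩, hcut⟩ := hG3 (s (t l)) (s (t j)) (by omega)
  refine ⟨S.B.teleEquiv _ hn hn0 x, S.B.teleEquiv _ hn hn0 y, ⟨?_, ?_, ?_⟩, ?_⟩
  · exact fun h => hne ((Equiv.injective _) h)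
  · exact (S.B.tele_sameCoding _ hn hn0 S.T l x y).2 (sameCoding_mono hb1 hsc)
  · intro h
    exact hnsc (sameCoding_mono (by omega) ((S.B.tele_sameCoding _ hn hn0 S.T (l + 1) x y).1 h))
  · exact (S.B.tele_hasCut _ hn hn0 S.T j x y).2 hcut

theorem exists_untimed (S : BVSystem) (hw : ¬ S.B.WeaklyWellTimed S.T) :
    ∃ S' : BVSystem, Conjugate S S' ∧ S'.B.Untimed S'.T := by
  classical
  obtain ⟨s, hs, hs0, hfull⟩ := S.simple
  unfold WeaklyWellTimed at hw
  push Not at hw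
  obtain ⟨K, hK⟩ := hw
  have hch : ∀ d : ℕ, ∃ j, K + 1 ≤ d →
      ∀ x y, S.B.DepthPair S.T d x y → ¬ S.B.HasCut S.T j x y := by
    intro d
    by_cases hd : K + 1 ≤ d
    · obtain ⟨j, -, hj⟩ := hK d (by omega) (by omega)
      exact ⟨j, fun _ => hj⟩
    · exact ⟨0, fun h => absurd h hd⟩
  choose jf hjf using hch
  let t : ℕ → ℕ := fun l => l * (K + 1)
  have ht : StrictMono t := fun a b h => Nat.mul_lt_mul_of_pos_right h (Nat.succ_pos K)
  have hn : StrictMono (fun l => s (t l)) := hs.comp ht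
  have hn0 : (fun l => s (t l)) 0 = 0 := by simp [t, hs0]
  refine ⟨teleSystem S (fun l => s (t l)) hn hn0
    (fun l c h => fullConn_comp hs hfull ht l c h), conj_tele _ _ _ _ _, ?_⟩
  intro l hl
  refine ⟨(Finset.range (s (t (l + 1)))).sup jf + l + 1, by omega, ?_⟩
  rintro x y ⟨-, hsc, hnsc⟩ hcut
  obtain ⟨x, rfl⟩ := (S.B.teleEquiv _ hn hn0).surjective x
  obtain ⟨y, rfl⟩ := (S.B.teleEquiv _ hn hn0).surjective y
  have hsc' := (S.B.tele_sameCoding _ hn hn0 S.T l x y).1 hsc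
  have hnsc' := mt (S.B.tele_sameCoding _ hn hn0 S.T (l + 1) x y).2 hnsc
  have hcut' := (S.B.tele_hasCut _ hn hn0 S.T _ x y).1 hcut
  obtain ⟨d, hd1, hd2, hd⟩ := exists_depth hsc' hnsc'
  have hKd : K + 1 ≤ d := by
    have h1 := hs.le_apply (x := t l)
    have h2 : 1 * (K + 1) ≤ t l := Nat.mul_le_mul_right _ hl
    omega
  refine hjf d hKd x y hd (hasCut_mono ?_ hcut')
  have h1 := Finset.le_sup (f := jf) (Finset.mem_range.2 hd2)
  have h2 := hn.le_apply (x := (Finset.range (s (t (l + 1)))).sup jf + l + 1)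
  exact le_trans (by omega) h2

theorem wwt_of_wellTimed (S : BVSystem) (h : S.B.WellTimed S.T) : S.B.WeaklyWellTimed S.T :=
  fun K => ⟨K + 1, by omega, by omega, h (K + 1) (by omega)⟩

theorem not_wwt_of_untimed (S : BVSystem) (h : S.B.Untimed S.T) : ¬ S.B.WeaklyWellTimed S.T := by
  intro hw
  obtain ⟨k, -, hk, hg⟩ := hw 0
  obtain ⟨j, hj, hno⟩ := h k hk
  obtain ⟨x, y, hd, hc⟩ := hg j hj
  exact hno x y hd hc

/-- Every nonexpansive simple, properly ordered Bratteli–Vershik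
system is conjugate to a well timed system or conjugate to an untimed system, and
not both. -/
theorem nonexpansive_dichotomy (S : BVSystem) (hne : S.B.Nonexpansive S.T) :
    Xor' (∃ S' : BVSystem, Conjugate S S' ∧ S'.B.WellTimed S'.T)
         (∃ S' : BVSystem, Conjugate S S' ∧ S'.B.Untimed S'.T) := by
  by_cases hw : S.B.WeaklyWellTimed S.T
  · refine Or.inl ⟨exists_wellTimed S hw, ?_⟩
    rintro ⟨S', hc, hu⟩
    exact not_wwt_of_untimed S' hu (wwt_of_conj hc hw)
  · refine Or.inr ⟨exists_untimed S hw, ?_⟩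
    rintro ⟨S', hc, hu⟩
    exact hw (wwt_of_conj (conj_symm hc) (wwt_of_wellTimed S' hu))
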